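/- Every finite connected simple graph G with at most 4 vertices satisfies σ×_V(G)=σ×_E(G); every finite connected simple graph G with exactly 5 vertices and at most 6 edges satisfies σ×_V(G)=σ×_E(G); and the graph K_4^+, which has 5 vertices and 7 edges, satisfies σ×_V(K_4^+) ≠ σ×_E(K_4^+). Hence K_4^+ is a graph of minimal order and minimal size with σ×_V(G) ≠ σ×_E(G). -/

import Mathlib

open SimpleGraph

/-- An `l`-track on `G`: a surjective function whose consecutive values are adjacent. -/
def IsTrack {V : Type*} (G : SimpleGraph V) {l : ℕ} (f : Fin l → V) : Prop :=
  Function.Surjective f ∧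
    ∀ i : ℕ, ∀ hi : i + 1 < l, G.Adj (f ⟨i, Nat.lt_of_succ_lt hi⟩) (f ⟨i + 1, hi⟩)

/-- A lazy `l`-track on `G`: consecutive values are adjacent or equal. -/
def IsLazyTrack {V : Type*} (G : SimpleGraph V) {l : ℕ} (f : Fin l → V) : Prop :=
  Function.Surjective f ∧
    ∀ i : ℕ, ∀ hi : i + 1 < l,
      G.Adj (f ⟨i, Nat.lt_of_succ_lt hi⟩) (f ⟨i + 1, hi⟩) ∨
        f ⟨i, Nat.lt_of_succ_lt hi⟩ = f ⟨i + 1, hi⟩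

/-- The condition that every edge of `G` is traversed by `f`. -/
def SweepCond {V : Type*} (G : SimpleGraph V) {l : ℕ} (f : Fin l → V) : Prop :=
  ∀ e ∈ G.edgeSet, ∃ i : ℕ, ∃ hi : i + 1 < l,
    e = s(f ⟨i, Nat.lt_of_succ_lt hi⟩, f ⟨i + 1, hi⟩)

/-- An `l`-sweep on `G`: an `l`-track traversing every edge. -/
def IsSweep {V : Type*} (G : SimpleGraph V) {l : ℕ} (f : Fin l → V) : Prop :=
  IsTrack G f ∧ SweepCond G f

/-- A lazy `l`-sweep on `G`: a lazy `l`-track traversing every edge. -/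
def IsLazySweep {V : Type*} (G : SimpleGraph V) {l : ℕ} (f : Fin l → V) : Prop :=
  IsLazyTrack G f ∧ SweepCond G f

/-- `f` and `g` are opposite: at each step exactly `f` moves iff `g` stays. -/
def IsOpposite {V : Type*} (G : SimpleGraph V) {l : ℕ} (f g : Fin l → V) : Prop :=
  ∀ i : ℕ, ∀ hi : i + 1 < l,
    (G.Adj (f ⟨i, Nat.lt_of_succ_lt hi⟩) (f ⟨i + 1, hi⟩) ↔
      g ⟨i, Nat.lt_of_succ_lt hi⟩ = g ⟨i + 1, hi⟩)

/-- The distance `m_G(f,g)`: minimal distance between simultaneous positions. -/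
noncomputable def mDist {V : Type*} (G : SimpleGraph V) {l : ℕ} (f g : Fin l → V) : ℕ :=
  sInf {d | ∃ i : Fin l, G.dist (f i) (g i) = d}

/-- Strong vertex span `σ⊠_V(G)`. -/
noncomputable def strongVertexSpan {V : Type*} (G : SimpleGraph V) : ℕ :=
  sSup {d | ∃ (l : ℕ) (f g : Fin l → V), IsLazyTrack G f ∧ IsLazyTrack G g ∧ mDist G f g = d}

/-- Direct vertex span `σ×_V(G)`. -/
noncomputable def directVertexSpan {V : Type*} (G : SimpleGraph V) : ℕ :=
  sSup {d | ∃ (l : ℕ) (f g : Fin l → V), IsTrack G f ∧ IsTrack G g ∧ mDist G f g = d}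

/-- Cartesian vertex span `σ□_V(G)`. -/
noncomputable def cartesianVertexSpan {V : Type*} (G : SimpleGraph V) : ℕ :=
  sSup {d | ∃ (l : ℕ) (f g : Fin l → V),
    IsLazyTrack G f ∧ IsLazyTrack G g ∧ IsOpposite G f g ∧ mDist G f g = d}

/-- Strong edge span `σ⊠_E(G)`. -/
noncomputable def strongEdgeSpan {V : Type*} (G : SimpleGraph V) : ℕ :=
  sSup {d | ∃ (l : ℕ) (f g : Fin l → V), IsLazySweep G f ∧ IsLazySweep G g ∧ mDist G f g = d}

/-- Direct edge span `σ×_E(G)`. -/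
noncomputable def directEdgeSpan {V : Type*} (G : SimpleGraph V) : ℕ :=
  sSup {d | ∃ (l : ℕ) (f g : Fin l → V), IsSweep G f ∧ IsSweep G g ∧ mDist G f g = d}

/-- Cartesian edge span `σ□_E(G)`. -/
noncomputable def cartesianEdgeSpan {V : Type*} (G : SimpleGraph V) : ℕ :=
  sSup {d | ∃ (l : ℕ) (f g : Fin l → V),
    IsLazySweep G f ∧ IsLazySweep G g ∧ IsOpposite G f g ∧ mDist G f g = d}

/-- `L⊠_V(G)`: minimal length of lazy tracks realizing the strong vertex span. -/
noncomputable def strongVertexL {V : Type*} (G : SimpleGraph V) : ℕ :=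
  sInf {l | ∃ f g : Fin l → V,
    IsLazyTrack G f ∧ IsLazyTrack G g ∧ mDist G f g = strongVertexSpan G}

/-- `L×_V(G)`. -/
noncomputable def directVertexL {V : Type*} (G : SimpleGraph V) : ℕ :=
  sInf {l | ∃ f g : Fin l → V,
    IsTrack G f ∧ IsTrack G g ∧ mDist G f g = directVertexSpan G}

/-- `L□_V(G)`. -/
noncomputable def cartesianVertexL {V : Type*} (G : SimpleGraph V) : ℕ :=
  sInf {l | ∃ f g : Fin l → V,
    IsLazyTrack G f ∧ IsLazyTrack G g ∧ IsOpposite G f g ∧ mDist G f g = cartesianVertexSpan G}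

/-- `L⊠_E(G)`. -/
noncomputable def strongEdgeL {V : Type*} (G : SimpleGraph V) : ℕ :=
  sInf {l | ∃ f g : Fin l → V,
    IsLazySweep G f ∧ IsLazySweep G g ∧ mDist G f g = strongEdgeSpan G}

/-- `L×_E(G)`. -/
noncomputable def directEdgeL {V : Type*} (G : SimpleGraph V) : ℕ :=
  sInf {l | ∃ f g : Fin l → V,
    IsSweep G f ∧ IsSweep G g ∧ mDist G f g = directEdgeSpan G}

/-- `L□_E(G)`. -/
noncomputable def cartesianEdgeL {V : Type*} (G : SimpleGraph V) : ℕ :=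
  sInf {l | ∃ f g : Fin l → V,
    IsLazySweep G f ∧ IsLazySweep G g ∧ IsOpposite G f g ∧ mDist G f g = cartesianEdgeSpan G}

/-- `K_n^+`: the complete graph `K_n` (on `Fin n`, with `v_1 = 0` and `v_n = n-1`)
with the edge `v_1 v_n` subdivided through the new vertex `w = Sum.inr ()`. -/
def KnPlus (n : ℕ) : SimpleGraph (Fin n ⊕ Unit) :=
  SimpleGraph.fromRel (fun a b =>
    match a, b with
    | Sum.inl i, Sum.inl j =>
        ¬((i.val = 0 ∧ j.val = n - 1) ∨ (i.val = n - 1 ∧ j.val = 0))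
    | Sum.inl i, Sum.inr _ => i.val = 0 ∨ i.val = n - 1
    | Sum.inr _, _ => False)


section FiniteCheck

variable {n : ℕ}

/-- `s` is a pair of distinct non-adjacent vertices for the adjacency matrix `a`. -/
def farB (a : Fin n → Fin n → Bool) (s : Fin n × Fin n) : Bool :=
  s.1 != s.2 && !a s.1 s.2

/-- Both coordinates move along an edge between far pairs. -/
def stepB (a : Fin n → Fin n → Bool) (s t : Fin n × Fin n) : Bool :=
  a s.1 t.1 && a s.2 t.2 && farB a s && farB a t

/-- The members of `S` together with the pairs one step away from `S`. -/
def growB (a : Fin n → Fin n → Bool) (S : List (Fin n × Fin n)) : List (Fin n × Fin n) :=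
  (List.finRange n ×ˢ List.finRange n).filter fun t => S.elem t || S.any (stepB a · t)

/-- `S` is closed under steps, and if it covers all vertices in both coordinates, then its first
coordinate traverses the edge from `0` to `1`. -/
def EdgeCertified (a : Fin (n + 3) → Fin (n + 3) → Bool)
    (S : List (Fin (n + 3) × Fin (n + 3))) : Prop :=
  (∀ t ∈ growB a S, t ∈ S) ∧
    ((∀ i, (∃ s ∈ S, s.1 = i) ∧ ∃ s ∈ S, s.2 = i) →
      ∃ s ∈ S, ∃ t ∈ S, stepB a s t = true ∧ s.1 = 0 ∧ t.1 = 1)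

instance (a : Fin (n + 3) → Fin (n + 3) → Bool) (S : List (Fin (n + 3) × Fin (n + 3))) :
    Decidable (EdgeCertified a S) := by
  unfold EdgeCertified; infer_instance

/-- For a graph in which every vertex has a far vertex, either some step from `(0, 2)` moves the
first coordinate to `1`, or the closure of `(0, 2)` under steps is certified. -/
def EdgeCheck (a : Fin (n + 3) → Fin (n + 3) → Bool) : Prop :=
  (∀ i, ∃ j, farB a (i, j) = true) → (∃ z, (a 2 z && farB a (1, z)) = true) ∨
    EdgeCertified a ((growB a)^[5] [(0, 2)])

instance (a : Fin (n + 3) → Fin (n + 3) → Bool) : Decidable (EdgeCheck a) := by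
  unfold EdgeCheck; infer_instance

theorem edgeCheck_four : ∀ b₀₃ b₁₂ b₁₃ b₂₃ : Bool,
    EdgeCheck (n := 1) ![![false, true, false, b₀₃], ![true, false, b₁₂, b₁₃],
      ![false, b₁₂, false, b₂₃], ![b₀₃, b₁₃, b₂₃, false]] := by
  decide +kernel

theorem edgeCheck_five : ∀ b₀₃ b₀₄ b₁₂ b₁₃ b₁₄ b₂₃ b₂₄ b₃₄ : Bool,
    b₀₃.toNat + b₀₄.toNat + b₁₂.toNat + b₁₃.toNat + b₁₄.toNat + b₂₃.toNat + b₂₄.toNat +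
      b₃₄.toNat ≤ 5 →
    EdgeCheck (n := 2) ![![false, true, false, b₀₃, b₀₄], ![true, false, b₁₂, b₁₃, b₁₄],
      ![false, b₁₂, false, b₂₃, b₂₄], ![b₀₃, b₁₃, b₂₃, false, b₃₄],
      ![b₀₄, b₁₄, b₂₄, b₃₄, false]] := by
  decide +kernel

end FiniteCheck

section Spans

variable {V : Type*} {G : SimpleGraph V} {d l : ℕ}

theorem mDist_le (f g : Fin l → V) (i : Fin l) : mDist G f g ≤ G.dist (f i) (g i) :=
  Nat.sInf_le ⟨i, rfl⟩

theorem le_mDist {f g : Fin (l + 1) → V} (h : ∀ i, d ≤ G.dist (f i) (g i)) : d ≤ mDist G f g :=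
  le_csInf ⟨_, 0, rfl⟩ fun _ ⟨i, hi⟩ => hi ▸ h i

/-- The graph of simultaneous moves of two players on `G` who keep distance at least `d`. -/
def pairGraph (G : SimpleGraph V) (d : ℕ) : SimpleGraph (V × V) where
  Adj s t := G.Adj s.1 t.1 ∧ G.Adj s.2 t.2 ∧ d ≤ G.dist s.1 s.2 ∧ d ≤ G.dist t.1 t.2
  symm := ⟨fun _ _ h => ⟨h.1.symm, h.2.1.symm, h.2.2.2, h.2.2.1⟩⟩
  loopless := ⟨fun _ h => h.1.ne rfl⟩

theorem pairGraph_reachable_swap {s t : V × V} (h : (pairGraph G d).Reachable s t) :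
    (pairGraph G d).Reachable s.swap t.swap := by
  refine h.map (⟨Prod.swap, fun {a b} h => ?_⟩ : pairGraph G d →g pairGraph G d)
  exact ⟨h.2.1, h.1, by simpa [G.dist_comm] using h.2.2.1, by simpa [G.dist_comm] using h.2.2.2⟩

theorem le_dist_of_pairGraph_reachable {s t : V × V} (h : (pairGraph G d).Reachable s t)
    (hs : d ≤ G.dist s.1 s.2) : d ≤ G.dist t.1 t.2 := by
  obtain ⟨p⟩ := h
  induction p with
  | nil => exact hs
  | cons h _ ih => exact ih h.2.2.2

theorem pairGraph_reachable_of_isTrack {f g : Fin (l + 1) → V} (hf : IsTrack G f)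
    (hg : IsTrack G g) (hd : d ≤ mDist G f g) (i : Fin (l + 1)) :
    (pairGraph G d).Reachable (f 0, g 0) (f i, g i) := by
  obtain ⟨i, hi⟩ := i
  induction i with
  | zero => exact .rfl
  | succ i ih =>
    refine (ih (by lia)).trans (Adj.reachable ?_)
    exact ⟨hf.2 i hi, hg.2 i hi, hd.trans (mDist_le ..), hd.trans (mDist_le ..)⟩

/-- In a graph, some walk starting at `s` traverses any finite set of edges reachable from `s`. -/
theorem exists_walk_edges {W : Type*} {H : SimpleGraph W} (s : W) (E : Finset (Sym2 W))
    (hE : ∀ e ∈ E, ∃ x y, e = s(x, y) ∧ H.Adj x y ∧ H.Reachable s x) :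
    ∃ (t : W) (p : H.Walk s t), ∀ e ∈ E, e ∈ p.edges := by
  classical
  induction E using Finset.induction_on with
  | empty => exact ⟨s, .nil, by simp⟩
  | insert e E _ ih =>
    obtain ⟨t, p, hp⟩ := ih fun e he => hE e (Finset.mem_insert_of_mem he)
    obtain ⟨x, y, rfl, hxy, hx⟩ := hE e (Finset.mem_insert_self _ _)
    obtain ⟨q⟩ := (p.reachable.symm.trans hx)
    refine ⟨y, (p.append q).concat hxy, fun e he => ?_⟩
    rcases Finset.mem_insert.1 he with rfl | he
    · simp
    · simp [hp e he]

/-- Edge `uv` of `G` is traversed by the first coordinate in the component of `s`. -/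
def Traverses (G : SimpleGraph V) (d : ℕ) (s : V × V) (u v : V) : Prop :=
  ∃ x y, (pairGraph G d).Reachable s (u, x) ∧ (pairGraph G d).Adj (u, x) (v, y)

theorem exists_sweeps [Finite V] {s : V × V} (hs : d ≤ G.dist s.1 s.2)
    (hG : ∀ u, ∃ v, G.Adj u v)
    (h₁ : ∀ u v, G.Adj u v → Traverses G d s u v)
    (h₂ : ∀ u v, G.Adj u v → Traverses G d s.swap u v) :
    ∃ (l : ℕ) (f g : Fin l → V), IsSweep G f ∧ IsSweep G g ∧ d ≤ mDist G f g := by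
  classical
  have := Fintype.ofFinite V
  obtain ⟨t, p, hp⟩ := exists_walk_edges (H := pairGraph G d) s
    (Finset.univ.filter fun e => ∃ x y, e = s(x, y) ∧ (pairGraph G d).Adj x y ∧
      (pairGraph G d).Reachable s x) (by simp)
  simp only [Finset.mem_filter, Finset.mem_univ, true_and] at hp
  have key : ∀ x y, (pairGraph G d).Adj x y → (pairGraph G d).Reachable s x →
      ∃ i < p.length, s(p.getVert i, p.getVert (i + 1)) = s(x, y) := fun x y hxy hx =>
    (p.mk_mem_edges_iff_exists).1 (hp _ ⟨x, y, rfl, hxy, hx⟩)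
  have step : ∀ i, i + 1 < p.length + 1 →
      (pairGraph G d).Adj (p.getVert i) (p.getVert (i + 1)) := fun i hi =>
    p.adj_getVert_succ (by lia)
  have sweep : ∀ π : V × V → V, (∀ x y, (pairGraph G d).Adj x y → G.Adj (π x) (π y)) →
      (∀ u v, G.Adj u v → ∃ x y, π x = u ∧ π y = v ∧ (pairGraph G d).Adj x y ∧
        (pairGraph G d).Reachable s x) →
      IsSweep G fun i : Fin (p.length + 1) => π (p.getVert i) := by
    intro π hπ hcov
    have cond : ∀ u v, G.Adj u v → ∃ i < p.length,
        s(u, v) = s(π (p.getVert i), π (p.getVert (i + 1))) := by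
      intro u v huv
      obtain ⟨x, y, rfl, rfl, hxy, hx⟩ := hcov u v huv
      obtain ⟨i, hi, h⟩ := key x y hxy hx
      exact ⟨i, hi, by simpa using congrArg (Sym2.map π) h.symm⟩
    refine ⟨⟨fun u => ?_, fun i hi => hπ _ _ (step i hi)⟩, fun e he => ?_⟩
    · obtain ⟨v, huv⟩ := hG u
      obtain ⟨i, hi, h⟩ := cond u v huv
      rcases Sym2.eq_iff.1 h with h | h
      · exact ⟨⟨i, by lia⟩, h.1.symm⟩
      · exact ⟨⟨i + 1, by lia⟩, h.1.symm⟩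
    · induction e using Sym2.ind with
      | _ u v =>
        obtain ⟨i, hi, h⟩ := cond u v he
        exact ⟨i, by lia, h⟩
  refine ⟨p.length + 1, fun i => (p.getVert i).1, fun i => (p.getVert i).2,
    sweep Prod.fst (fun _ _ h => h.1) fun u v huv => ?_,
    sweep Prod.snd (fun _ _ h => h.2.1) fun u v huv => ?_, le_mDist fun i => ?_⟩
  · obtain ⟨x, y, hr, ha⟩ := h₁ u v huv
    exact ⟨_, _, rfl, rfl, ha, hr⟩
  · obtain ⟨x, y, hr, ha⟩ := h₂ u v huv
    exact ⟨(x, u), (y, v), rfl, rfl,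
      ⟨ha.2.1, ha.1, by simpa [G.dist_comm] using ha.2.2.1, by simpa [G.dist_comm] using ha.2.2.2⟩,
      by simpa using pairGraph_reachable_swap hr⟩
  · exact le_dist_of_pairGraph_reachable (p.take i).reachable hs

theorem bddAbove_mDist [Finite V] (P : ∀ l, (Fin l → V) → (Fin l → V) → Prop) :
    BddAbove {d | ∃ (l : ℕ) (f g : Fin l → V), P l f g ∧ mDist G f g = d} := by
  obtain ⟨B, hB⟩ := (Set.finite_range fun s : V × V => G.dist s.1 s.2).bddAbove
  refine ⟨B, ?_⟩
  rintro _ ⟨l, f, g, -, rfl⟩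
  rcases l with _ | l
  · simp [mDist]
  · exact (mDist_le f g 0).trans (hB ⟨(f 0, g 0), rfl⟩)

theorem le_directVertexSpan [Finite V] {f g : Fin l → V} (hf : IsTrack G f) (hg : IsTrack G g)
    (hd : d ≤ mDist G f g) : d ≤ directVertexSpan G := by
  refine hd.trans (le_csSup ?_ ⟨l, f, g, hf, hg, rfl⟩)
  simpa [and_assoc] using bddAbove_mDist (G := G) fun _ f g => IsTrack G f ∧ IsTrack G g

theorem le_directEdgeSpan [Finite V] {f g : Fin l → V} (hf : IsSweep G f) (hg : IsSweep G g)
    (hd : d ≤ mDist G f g) : d ≤ directEdgeSpan G := by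
  refine hd.trans (le_csSup ?_ ⟨l, f, g, hf, hg, rfl⟩)
  simpa [and_assoc] using bddAbove_mDist (G := G) fun _ f g => IsSweep G f ∧ IsSweep G g

theorem directEdgeSpan_le_directVertexSpan [Finite V] :
    directEdgeSpan G ≤ directVertexSpan G := by
  refine csSup_le' ?_
  rintro _ ⟨l, f, g, hf, hg, rfl⟩
  exact le_directVertexSpan hf.1 hg.1 le_rfl

theorem one_le_directEdgeSpan [Finite V] [Nontrivial V] (hG : G.Connected) :
    1 ≤ directEdgeSpan G := by
  have hadj := hG.preconnected.exists_adj_of_nontrivial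
  obtain ⟨a⟩ := hG.nonempty
  obtain ⟨b, hab⟩ := hadj a
  have step : ∀ {x y z}, G.Adj x y → G.Adj y z → (pairGraph G 1).Adj (x, y) (y, z) :=
    fun hxy hyz => ⟨hxy, hyz, (dist_eq_one_iff_adj.2 hxy).ge, (dist_eq_one_iff_adj.2 hyz).ge⟩
  have reach : ∀ a b, G.Adj a b → ∀ u, ∃ c, G.Adj c u ∧
      (pairGraph G 1).Reachable (a, b) (c, u) := by
    intro a b hab u
    obtain ⟨p⟩ := hG.preconnected b u
    induction p generalizing a with
    | nil => exact ⟨a, hab, .rfl⟩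
    | cons h _ ih =>
      obtain ⟨c, hc, hr⟩ := ih _ h
      exact ⟨c, hc, (step hab h).reachable.trans hr⟩
  have trav : ∀ a b, G.Adj a b → ∀ u v, G.Adj u v → Traverses G 1 (a, b) u v := by
    intro a b hab u v huv
    obtain ⟨c, hc, hr⟩ := reach a b hab u
    exact ⟨v, u, hr.trans (step hc huv).reachable, step huv huv.symm⟩
  obtain ⟨l, f, g, hf, hg, h⟩ := exists_sweeps (s := (a, b)) (dist_eq_one_iff_adj.2 hab).ge hadj
    (trav a b hab) (trav b a hab.symm)
  exact le_directEdgeSpan hf hg h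

theorem two_le_dist_iff (hG : G.Connected) {u v : V} :
    2 ≤ G.dist u v ↔ u ≠ v ∧ ¬G.Adj u v := by
  refine ⟨fun h => ⟨?_, fun ha => ?_⟩, fun h => hG.one_lt_dist_of_ne_of_not_adj h.1 h.2⟩
  · rintro rfl
    simp at h
  · simp [dist_eq_one_iff_adj.2 ha] at h

/-- In a connected graph with at most five vertices, some ball of radius two is everything. -/
theorem exists_dist_le_two [Fintype V] (hG : G.Connected) (hc : Fintype.card V ≤ 5) :
    ∃ u, ∀ v, G.dist u v ≤ 2 := by
  classical
  by_contra! h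
  obtain ⟨a⟩ := hG.nonempty
  obtain ⟨b, hab⟩ := h a
  obtain ⟨p, hp⟩ := hG.exists_walk_length_eq_dist a b
  have h3 := dist_le (p.drop 3)
  have h3' := hG.dist_triangle (u := a) (v := p.getVert 3) (w := b)
  rw [p.drop_length] at h3
  have a0 := p.adj_getVert_succ (i := 0) (by lia)
  have a1 := p.adj_getVert_succ (i := 1) (by lia)
  have a2 := p.adj_getVert_succ (i := 2) (by lia)
  rw [p.getVert_zero] at a0
  simp only [zero_add, Nat.reduceAdd] at a0 a1 a2
  have h03 : 3 ≤ G.dist a (p.getVert 3) := by lia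
  clear h3 h3' hp
  generalize p.getVert 1 = v₁ at *
  generalize p.getVert 2 = v₂ at *
  generalize p.getVert 3 = v₃ at *
  obtain ⟨r, hr⟩ := h v₁
  obtain ⟨r', hr'⟩ := h v₂
  have tri : ∀ x y z, G.Adj x y → G.dist x z ≤ 1 + G.dist y z := fun x y z hxy =>
    dist_eq_one_iff_adj.2 hxy ▸ hG.dist_triangle
  have key : ∀ x y z, G.Adj x y → 3 ≤ G.dist x z → z ≠ x ∧ z ≠ y ∧ ¬G.Adj y z := by
    intro x y z hxy hz
    have := tri x y z hxy
    refine ⟨?_, ?_, fun h => ?_⟩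
    · rintro rfl; simp at hz
    · rintro rfl; simp at this; lia
    · have := dist_eq_one_iff_adj.2 h; lia
  have k0 := key _ _ _ a0 h03
  have k1 := key _ _ _ a0.symm hr
  have k1' := key _ _ _ a1 hr
  have k2 := key _ _ _ a1.symm hr'
  have k2' := key _ _ _ a2 hr'
  have r3 : r ≠ v₃ := fun e => k1'.2.2 (e ▸ a2)
  have r0 : r' ≠ a := fun e => k2.2.2 (e ▸ a0.symm)
  have h02 : a ≠ v₂ := by
    rintro rfl
    simp [dist_eq_one_iff_adj.2 a2] at h03
  have huniv : ({a, v₁, v₂, v₃, r} : Finset V) = Finset.univ := by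
    refine Finset.eq_univ_of_card _ (le_antisymm (Finset.card_le_univ _) (hc.trans ?_))
    rw [Finset.card_insert_of_notMem, Finset.card_insert_of_notMem, Finset.card_insert_of_notMem,
      Finset.card_insert_of_notMem, Finset.card_singleton] <;>
    simp [r3.symm, a0.ne, a1.ne, a2.ne, h02, k0.1.symm, k0.2.1.symm, k1.1.symm, k1.2.1.symm,
      k1'.2.1.symm]
  have mem : ∀ x, x = a ∨ x = v₁ ∨ x = v₂ ∨ x = v₃ ∨ x = r := fun x => by
    have := Finset.mem_univ x
    rw [← huniv] at this
    simpa using this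
  have hrr : r' = r := by simpa [k2.1, k2.2.1, k2'.2.1, r0] using mem r'
  have : Nontrivial V := ⟨a, v₁, a0.ne⟩
  obtain ⟨w, hw⟩ := hG.preconnected.exists_adj_of_nontrivial r
  rcases mem w with rfl | rfl | rfl | rfl | rfl
  · exact k1.2.2 hw.symm
  · exact k2.2.2 (hrr ▸ hw.symm)
  · exact k1'.2.2 hw.symm
  · exact k2'.2.2 (hrr ▸ hw.symm)
  · exact hw.ne rfl

end Spans

section SmallGraphs

variable {V : Type*} {G : SimpleGraph V} {n : ℕ}

theorem exists_equiv_apply_eq [Fintype V] (hc : Fintype.card V = n + 3) {u v x : V}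
    (huv : u ≠ v) (hux : u ≠ x) (hvx : v ≠ x) :
    ∃ e : Fin (n + 3) ≃ V, e 0 = u ∧ e 1 = v ∧ e 2 = x := by
  classical
  have h01 : (0 : Fin (n + 3)) ≠ 1 := by simp
  have h02 : (0 : Fin (n + 3)) ≠ 2 := by
    simp [Fin.ext_iff, Nat.mod_eq_of_lt (show 2 < n + 3 by lia)]
  have h12 : (1 : Fin (n + 3)) ≠ 2 := by
    simp [Fin.ext_iff, Nat.mod_eq_of_lt (show 2 < n + 3 by lia)]
  obtain ⟨e, he⟩ := Finset.exists_equiv_extend_of_card_eq (α := Fin (n + 3))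
    (t := (Finset.univ : Finset V)) (by simp [hc]) (s := {0, 1, 2})
    (f := fun i => if i = 0 then u else if i = 1 then v else x) (Finset.subset_univ _) (by
      intro i hi j hj hij
      simp only [Finset.coe_insert, Finset.coe_singleton, Set.mem_insert_iff,
        Set.mem_singleton_iff] at hi hj
      rcases hi with rfl | rfl | rfl <;> rcases hj with rfl | rfl | rfl <;>
        simp_all [h01.symm, h02.symm, h12.symm, huv.symm, hux.symm, hvx.symm])
  refine ⟨e.trans (Equiv.subtypeUnivEquiv fun _ => Finset.mem_univ _), ?_, ?_, ?_⟩
  · simp [he 0]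
  · simp [he 1]
  · simp [he 2, h02.symm, h12.symm]

theorem farB_iff (hG : G.Connected) (e : Fin n ≃ V) {a : Fin n → Fin n → Bool}
    (ha : ∀ i j, a i j = true ↔ G.Adj (e i) (e j)) (s : Fin n × Fin n) :
    farB a s = true ↔ 2 ≤ G.dist (e s.1) (e s.2) := by
  rw [two_le_dist_iff hG, ← ha]
  simp [farB]

theorem stepB_iff (hG : G.Connected) (e : Fin n ≃ V) {a : Fin n → Fin n → Bool}
    (ha : ∀ i j, a i j = true ↔ G.Adj (e i) (e j)) (s t : Fin n × Fin n) :
    stepB a s t = true ↔ (pairGraph G 2).Adj (s.map e e) (t.map e e) := by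
  simp [stepB, pairGraph, farB_iff hG e ha, ha, and_assoc]

theorem traverses_of_edgeCheck (hG : G.Connected) (e : Fin (n + 3) ≃ V)
    {a : Fin (n + 3) → Fin (n + 3) → Bool} (ha : ∀ i j, a i j = true ↔ G.Adj (e i) (e j))
    (hcheck : EdgeCheck a) (h01 : G.Adj (e 0) (e 1)) (h02 : 2 ≤ G.dist (e 0) (e 2))
    (h₁ : ∀ v, ∃ t, (pairGraph G 2).Reachable (e 0, e 2) (v, t))
    (h₂ : ∀ v, ∃ t, (pairGraph G 2).Reachable (e 0, e 2) (t, v)) :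
    Traverses G 2 (e 0, e 2) (e 0) (e 1) := by
  have hfar : ∀ i, ∃ j, farB a (i, j) = true := by
    intro i
    obtain ⟨t, ht⟩ := h₁ (e i)
    refine ⟨e.symm t, (farB_iff hG e ha _).2 ?_⟩
    simpa using le_dist_of_pairGraph_reachable ht h02
  rcases hcheck hfar with ⟨z, hz⟩ | ⟨hclosed, hcert⟩
  · rw [Bool.and_eq_true, ha, farB_iff hG e ha] at hz
    exact ⟨e 2, e z, .rfl, h01, hz.1, h02, hz.2⟩
  · have hstart : ∀ k S, (0, 2) ∈ S → (0, 2) ∈ (growB a)^[k] S := by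
      intro k
      induction k with
      | zero => exact fun _ h => h
      | succ k ih => exact fun S h => ih _ (by simp [growB, h])
    have hsound : ∀ k S, (∀ s ∈ S, (pairGraph G 2).Reachable (e 0, e 2) (s.map e e)) →
        ∀ s ∈ (growB a)^[k] S, (pairGraph G 2).Reachable (e 0, e 2) (s.map e e) := by
      intro k
      induction k with
      | zero => exact fun _ h => h
      | succ k ih =>
        refine fun S h => ih _ fun t ht => ?_
        simp only [growB, List.mem_filter, Bool.or_eq_true, List.any_eq_true, List.elem_eq_mem,
          decide_eq_true_eq] at ht
        rcases ht.2 with ht | ⟨s, hs, hst⟩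
        · exact h t ht
        · exact (h s hs).trans ((stepB_iff hG e ha s t).1 hst).reachable
    have hcomplete : ∀ s t : V × V, (pairGraph G 2).Walk s t →
        s.map e.symm e.symm ∈ (growB a)^[5] [(0, 2)] →
        t.map e.symm e.symm ∈ (growB a)^[5] [(0, 2)] := by
      intro s t p
      induction p with
      | nil => exact id
      | cons h _ ih =>
        refine fun hs => ih (hclosed _ ?_)
        simp only [growB, List.mem_filter, Bool.or_eq_true, List.any_eq_true]
        exact ⟨List.pair_mem_product.2 ⟨List.mem_finRange _, List.mem_finRange _⟩,
          .inr ⟨_, hs, (stepB_iff hG e ha _ _).2 (by simpa [Prod.map] using h)⟩⟩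
    have hmem : ∀ t, (pairGraph G 2).Reachable (e 0, e 2) t →
        t.map e.symm e.symm ∈ (growB a)^[5] [(0, 2)] := fun t ⟨p⟩ =>
      hcomplete _ _ p (by simpa using hstart 5 _ (by simp))
    obtain ⟨s, hs, t, -, hst, hs0, ht1⟩ := hcert fun i => by
      obtain ⟨x, hx⟩ := h₁ (e i)
      obtain ⟨y, hy⟩ := h₂ (e i)
      exact ⟨⟨_, hmem _ hx, by simp⟩, ⟨_, hmem _ hy, by simp⟩⟩
    have hr := hsound 5 [(0, 2)] (by simp) s hs
    rw [stepB_iff hG e ha] at hst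
    obtain ⟨s₁, s₂⟩ := s
    obtain ⟨t₁, t₂⟩ := t
    obtain rfl : s₁ = 0 := hs0
    obtain rfl : t₁ = 1 := ht1
    exact ⟨e s₂, e t₂, hr, hst⟩

theorem edgeCheck_of_card_four [DecidableRel G.Adj] (e : Fin 4 ≃ V) (h01 : G.Adj (e 0) (e 1))
    (h02 : ¬G.Adj (e 0) (e 2)) : EdgeCheck (n := 1) fun i j => decide (G.Adj (e i) (e j)) := by
  convert edgeCheck_four (decide (G.Adj (e 0) (e 3))) (decide (G.Adj (e 1) (e 2)))
    (decide (G.Adj (e 1) (e 3))) (decide (G.Adj (e 2) (e 3))) using 1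
  ext i j
  fin_cases i <;> fin_cases j <;> simp [h01, h02, h01.symm, G.adj_comm]

theorem edgeCheck_of_card_five [DecidableRel G.Adj] (e : Fin 5 ≃ V) (hE : G.edgeSet.ncard ≤ 6)
    (h01 : G.Adj (e 0) (e 1)) (h02 : ¬G.Adj (e 0) (e 2)) :
    EdgeCheck (n := 2) fun i j => decide (G.Adj (e i) (e j)) := by
  classical
  have := Fintype.ofEquiv _ e
  have hsum := G.sum_degrees_eq_twice_card_edges
  rw [← coe_edgeFinset, Set.ncard_coe_finset] at hE
  have hdeg : ∀ v, G.degree v = ∑ w, if G.Adj v w then 1 else 0 := fun v => by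
    simpa using G.degree_eq_sum_if_adj (R := ℕ) v
  simp only [hdeg, ← e.sum_comp, Fin.sum_univ_five] at hsum
  simp only [h01, h02, h01.symm, mt Adj.symm h02, SimpleGraph.irrefl, if_true, if_false,
    G.adj_comm (e 3) (e 0), G.adj_comm (e 4) (e 0), G.adj_comm (e 2) (e 1), G.adj_comm (e 3) (e 1),
    G.adj_comm (e 4) (e 1), G.adj_comm (e 3) (e 2), G.adj_comm (e 4) (e 2),
    G.adj_comm (e 4) (e 3)] at hsum
  convert edgeCheck_five (decide (G.Adj (e 0) (e 3))) (decide (G.Adj (e 0) (e 4)))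
    (decide (G.Adj (e 1) (e 2))) (decide (G.Adj (e 1) (e 3))) (decide (G.Adj (e 1) (e 4)))
    (decide (G.Adj (e 2) (e 3))) (decide (G.Adj (e 2) (e 4))) (decide (G.Adj (e 3) (e 4))) ?_
    using 1
  · ext i j
    fin_cases i <;> fin_cases j <;> simp [h01, h02, h01.symm, G.adj_comm]
  · simp only [Bool.toNat, Bool.cond_decide]
    lia

theorem traverses_of_card_le_five [Fintype V] (hG : G.Connected) (hc : Fintype.card V ≤ 5)
    (hE : Fintype.card V = 5 → G.edgeSet.ncard ≤ 6) {s : V × V} (hs : 2 ≤ G.dist s.1 s.2)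
    (h₁ : ∀ v, ∃ t, (pairGraph G 2).Reachable s (v, t))
    (h₂ : ∀ v, ∃ t, (pairGraph G 2).Reachable s (t, v)) {u v : V} (huv : G.Adj u v) :
    Traverses G 2 s u v := by
  classical
  obtain ⟨x, hx⟩ := h₁ u
  have hux := le_dist_of_pairGraph_reachable hx hs
  have hux' := (two_le_dist_iff hG).1 hux
  have hvx : v ≠ x := fun h => hux'.2 (h ▸ huv)
  obtain ⟨z, hzu, hzv, hzx⟩ : ∃ z, z ≠ u ∧ z ≠ v ∧ z ≠ x := by
    obtain ⟨y, hy⟩ := h₁ v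
    have hvy := (two_le_dist_iff hG).1 (le_dist_of_pairGraph_reachable hy hs)
    by_cases hyx : y = x
    · have : Nontrivial V := ⟨u, v, huv.ne⟩
      obtain ⟨z, hz⟩ := hG.preconnected.exists_adj_of_nontrivial x
      refine ⟨z, ?_, ?_, hz.ne'⟩
      · rintro rfl
        exact hux'.2 hz.symm
      · rintro rfl
        exact hvy.2 (hyx ▸ hz.symm)
    · refine ⟨y, ?_, hvy.1.symm, hyx⟩
      rintro rfl
      exact hvy.2 huv.symm
  have h4 : 4 ≤ Fintype.card V := by
    have := Finset.card_le_univ ({u, v, x, z} : Finset V)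
    rwa [Finset.card_insert_of_notMem (by simp [huv.ne, hux'.1, hzu.symm]),
      Finset.card_insert_of_notMem (by simp [hvx, hzv.symm]),
      Finset.card_pair hzx.symm] at this
  suffices ∃ (n : ℕ) (e : Fin (n + 3) ≃ V), e 0 = u ∧ e 1 = v ∧ e 2 = x ∧
      EdgeCheck fun i j => decide (G.Adj (e i) (e j)) by
    obtain ⟨n, e, rfl, rfl, rfl, he⟩ := this
    obtain ⟨y, z, hy, hyz⟩ := traverses_of_edgeCheck hG e (by simp) he huv hux
      (fun w => (h₁ w).imp fun _ h => hx.symm.trans h)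
      (fun w => (h₂ w).imp fun _ h => hx.symm.trans h)
    exact ⟨y, z, hx.trans hy, hyz⟩
  obtain hc | hc : Fintype.card V = 1 + 3 ∨ Fintype.card V = 2 + 3 := by lia
  · obtain ⟨e, rfl, rfl, rfl⟩ := exists_equiv_apply_eq hc huv.ne hux'.1 hvx
    exact ⟨1, e, rfl, rfl, rfl, edgeCheck_of_card_four e huv hux'.2⟩
  · obtain ⟨e, rfl, rfl, rfl⟩ := exists_equiv_apply_eq hc huv.ne hux'.1 hvx
    exact ⟨2, e, rfl, rfl, rfl, edgeCheck_of_card_five e (hE hc) huv hux'.2⟩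

theorem directVertexSpan_eq_directEdgeSpan [Fintype V] (hG : G.Connected)
    (hc : Fintype.card V ≤ 5) (hE : Fintype.card V = 5 → G.edgeSet.ncard ≤ 6) :
    directVertexSpan G = directEdgeSpan G := by
  refine le_antisymm (csSup_le' ?_) directEdgeSpan_le_directVertexSpan
  rintro _ ⟨l, f, g, hf, hg, rfl⟩
  obtain ⟨u, hu⟩ := exists_dist_le_two hG hc
  obtain ⟨i, rfl⟩ := hf.1 u
  obtain _ | l := l
  · exact i.elim0
  have hle := (mDist_le f g i).trans (hu (g i))
  rcases Nat.eq_zero_or_pos (mDist G f g) with h0 | h0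
  · simp [h0]
  have : Nontrivial V := ⟨f i, g i, fun h => by
    have := mDist_le (G := G) f g i
    simp only [h, dist_self] at this
    lia⟩
  rcases Nat.lt_or_ge (mDist G f g) 2 with h2 | h2
  · exact (by lia : mDist G f g ≤ 1).trans (one_le_directEdgeSpan hG)
  have hs : 2 ≤ G.dist (f 0) (g 0) := h2.trans (mDist_le f g 0)
  have h₁ : ∀ v, ∃ t, (pairGraph G 2).Reachable (f 0, g 0) (v, t) := fun v => by
    obtain ⟨j, rfl⟩ := hf.1 v
    exact ⟨_, pairGraph_reachable_of_isTrack hf hg h2 j⟩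
  have h₂ : ∀ v, ∃ t, (pairGraph G 2).Reachable (f 0, g 0) (t, v) := fun v => by
    obtain ⟨j, rfl⟩ := hg.1 v
    exact ⟨_, pairGraph_reachable_of_isTrack hf hg h2 j⟩
  obtain ⟨l, f', g', hf', hg', h⟩ := exists_sweeps (s := (f 0, g 0)) hs
    hG.preconnected.exists_adj_of_nontrivial
    (fun _ _ => traverses_of_card_le_five hG hc hE hs h₁ h₂)
    (fun _ _ => traverses_of_card_le_five hG hc hE (by simpa [G.dist_comm] using hs)
      (fun v => (h₂ v).imp fun _ h => pairGraph_reachable_swap h)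
      (fun v => (h₁ v).imp fun _ h => pairGraph_reachable_swap h))
  exact hle.trans (le_directEdgeSpan hf' hg' h)

end SmallGraphs

section KnPlusFour

instance : DecidableRel (KnPlus 4).Adj := fun a b => by
  cases a <;> cases b <;> unfold KnPlus <;> simp only [fromRel_adj] <;> infer_instance

theorem ncard_edgeSet_knPlus_four : (KnPlus 4).edgeSet.ncard = 7 := by
  rw [← coe_edgeFinset, Set.ncard_coe_finset]
  decide +kernel

theorem connected_knPlus_four : (KnPlus 4).Connected := by
  have h : ∀ a b, a = b ∨ (KnPlus 4).Adj a b ∨ ∃ c, (KnPlus 4).Adj a c ∧ (KnPlus 4).Adj c b := by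
    decide +kernel
  refine ⟨fun a b => ?_⟩
  rcases h a b with rfl | h | ⟨c, hac, hcb⟩
  · exact .rfl
  · exact h.reachable
  · exact hac.reachable.trans hcb.reachable

theorem two_le_directVertexSpan_knPlus_four : 2 ≤ directVertexSpan (KnPlus 4) := by
  have track : ∀ f : Fin 8 → Fin 4 ⊕ Unit, (∀ v, ∃ i, f i = v) →
      (∀ i : Fin 7, (KnPlus 4).Adj (f i.castSucc) (f i.succ)) → IsTrack (KnPlus 4) f :=
    fun f hf hs => ⟨hf, fun i hi => hs ⟨i, by lia⟩⟩
  refine le_directVertexSpan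
    (track ![.inl 0, .inr (), .inl 3, .inl 1, .inl 0, .inl 2, .inl 3, .inr ()] ?_ ?_)
    (track ![.inl 3, .inl 1, .inl 0, .inr (), .inl 3, .inr (), .inl 0, .inl 2] ?_ ?_)
    (le_mDist fun i => (two_le_dist_iff connected_knPlus_four).2 ?_)
  · decide +kernel
  · decide +kernel
  · decide +kernel
  · decide +kernel
  · revert i
    decide +kernel

theorem directEdgeSpan_knPlus_four_le : directEdgeSpan (KnPlus 4) ≤ 1 := by
  refine csSup_le' ?_
  rintro _ ⟨l, f, g, hf, hg, rfl⟩
  by_contra! h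
  have hfar : ∀ i, f i ≠ g i ∧ ¬(KnPlus 4).Adj (f i) (g i) := fun i =>
    (two_le_dist_iff connected_knPlus_four).1 (h.trans_le (mDist_le f g i))
  obtain ⟨i, hi, he⟩ := hf.2 s(.inl 1, .inl 2)
    (show (KnPlus 4).Adj _ _ by decide +kernel)
  have hstuck : ∀ a b x y : Fin 4 ⊕ Unit, s(.inl 1, .inl 2) = s(a, b) → a ≠ x →
      ¬(KnPlus 4).Adj a x → b ≠ y → ¬(KnPlus 4).Adj b y → ¬(KnPlus 4).Adj x y := by
    decide +kernel
  exact hstuck _ _ _ _ he (hfar _).1 (hfar _).2 (hfar _).1 (hfar _).2 (hg.1.2 i hi)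

end KnPlusFour

theorem stmt10 :
    (∀ (V : Type) [Fintype V] (G : SimpleGraph V), G.Connected → Fintype.card V ≤ 4 →
      directVertexSpan G = directEdgeSpan G) ∧
    (∀ (V : Type) [Fintype V] (G : SimpleGraph V), G.Connected → Fintype.card V = 5 →
      G.edgeSet.ncard ≤ 6 → directVertexSpan G = directEdgeSpan G) ∧
    (Fintype.card (Fin 4 ⊕ Unit) = 5 ∧ (KnPlus 4).edgeSet.ncard = 7 ∧
      directVertexSpan (KnPlus 4) ≠ directEdgeSpan (KnPlus 4)) := by
  refine ⟨fun V _ G hG hc => ?_, fun V _ G hG hc hE => ?_, rfl, ncard_edgeSet_knPlus_four, ?_⟩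
  · exact directVertexSpan_eq_directEdgeSpan hG (by lia) (by lia)
  · exact directVertexSpan_eq_directEdgeSpan hG hc.le fun _ => hE
  · exact (directEdgeSpan_knPlus_four_le.trans_lt two_le_directVertexSpan_knPlus_four).ne'
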